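/- arXiv:2305.19808 — 3 statements merged into one kernel-verified Lean document; each statement's English description precedes it below -/
import Mathlib

section
/- If x is an irrational real number that is not a quadratic irrational, then x is not periodic under f_Γ: for every integer N ≥ 1 one has f_Γ^[N](x) ≠ x. -/
/-!
Attach to a real number `y` the lattice `ℤ y + ℤ`. A step `y ↦ y ± 1` preserves it, and a step
`y ↦ -1/y` with `|y| < 1` divides it by `y`. If `x` has period `N`, then `ℤ x + ℤ` is therefore
stable under multiplication by the product `q` of the orbit points lying in `(-1, 1)`, and since `x`
is not quadratic, `q` is a nonzero integer. As `|q| < 1` once there is a factor, the orbit stays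
outside `(-1, 1)`; but there every step lowers the absolute value by `1`, so `x` never returns.
-/

noncomputable def fGamma (x : ℝ) : ℝ :=
  if x ≤ -1 then x + 1
  else if x < 1 then -1 / x
  else x - 1

open scoped Pointwise

theorem prod_smul_iterate {α β M : Type*} [CommMonoid M] [MulAction M β] {f : α → α} {j : α → M}
    {L : α → β} {s : Set α} (hf : Set.MapsTo f s s) (hL : ∀ y ∈ s, j y • L (f y) = L y) {x : α}
    (hx : x ∈ s) (N : ℕ) : (∏ k ∈ Finset.range N, j (f^[k] x)) • L (f^[N] x) = L x := by
  induction N with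
  | zero => simp
  | succ N ih =>
    rw [Finset.prod_range_succ, mul_smul, Function.iterate_succ_apply', hL _ (hf.iterate N hx), ih]

theorem one_le_of_one_le_prod_min {ι R : Type*} [CommSemiring R] [LinearOrder R]
    [IsOrderedRing R] {s : Finset ι} {f : ι → R} (hf : ∀ i ∈ s, 0 ≤ f i)
    (h : 1 ≤ ∏ i ∈ s, min (f i) 1) {i : ι} (hi : i ∈ s) : 1 ≤ f i :=
  calc
    1 ≤ ∏ k ∈ s, min (f k) 1 := h
    _ ≤ ∏ k ∈ {i}, min (f k) 1 :=
      Finset.prod_le_prod_of_subset_of_le_one (Finset.singleton_subset_iff.mpr hi)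
        (fun k hk ↦ le_min (hf k hk) zero_le_one) fun _ _ _ ↦ min_le_right _ _
    _ = min (f i) 1 := Finset.prod_singleton _ _
    _ ≤ f i := min_le_left _ _

/-- The lattice `ℤ x + ℤ`. Up to homothety it depends only on the orbit of `x` under integral
Möbius transformations of determinant `±1`. -/
def latticeOf {R : Type*} [CommRing R] (x : R) : Submodule ℤ R :=
  Submodule.span ℤ {x, 1}

theorem mem_latticeOf {R : Type*} [CommRing R] {x y : R} :
    y ∈ latticeOf x ↔ ∃ a b : ℤ, a * x + b = y := by
  simp [latticeOf, Submodule.mem_span_pair]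

theorem self_mem_latticeOf {R : Type*} [CommRing R] (x : R) : x ∈ latticeOf x :=
  Submodule.subset_span (Set.mem_insert _ _)

theorem one_mem_latticeOf {R : Type*} [CommRing R] (x : R) : 1 ∈ latticeOf x :=
  Submodule.subset_span (Set.mem_insert_of_mem _ rfl)

theorem latticeOf_add_intCast {R : Type*} [CommRing R] (x : R) (n : ℤ) :
    latticeOf (x + n) = latticeOf x := by
  ext y
  simp only [mem_latticeOf]
  constructor
  · rintro ⟨a, b, rfl⟩
    exact ⟨a, a * n + b, by push_cast; ring⟩
  · rintro ⟨a, b, rfl⟩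
    exact ⟨a, b - a * n, by push_cast; ring⟩

theorem smul_latticeOf_neg_inv {K : Type*} [Field K] {x : K} (hx : x ≠ 0) :
    x • latticeOf (-x⁻¹) = latticeOf x := by
  have smul_generators : x • ({-x⁻¹, 1} : Set K) = {-1, x} := by
    rw [Set.smul_set_insert, Set.smul_set_singleton, smul_eq_mul, smul_eq_mul, mul_neg,
      mul_inv_cancel₀ hx, mul_one]
  have span_neg_one : Submodule.span ℤ {(-1 : K)} = Submodule.span ℤ {1} := by
    rw [← Set.neg_singleton, Submodule.span_neg]
  rw [latticeOf, latticeOf, Submodule.smul_span, smul_generators, Submodule.span_insert,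
    span_neg_one, ← Submodule.span_insert, Set.pair_comm]

theorem exists_intCast_eq_of_smul_latticeOf_le {R : Type*} [CommRing R] {x q : R}
    (hx : ¬∃ a b c : ℤ, a ≠ 0 ∧ (a : R) * x ^ 2 + (b : R) * x + (c : R) = 0)
    (hq : q • latticeOf x ≤ latticeOf x) : ∃ n : ℤ, (n : R) = q := by
  have smul_mem {y : R} (hy : y ∈ latticeOf x) : q * y ∈ latticeOf x :=
    hq (Submodule.smul_mem_pointwise_smul y q _ hy)
  obtain ⟨c, d, hcd⟩ := mem_latticeOf.mp (smul_mem (one_mem_latticeOf x))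
  obtain ⟨a, b, hab⟩ := mem_latticeOf.mp (smul_mem (self_mem_latticeOf x))
  have quadratic : (c : R) * x ^ 2 + ((d - a : ℤ) : R) * x + ((-b : ℤ) : R) = 0 := by
    push_cast
    linear_combination x * hcd - hab
  have hc : c = 0 := by
    by_contra hc
    exact hx ⟨c, d - a, -b, hc, quadratic⟩
  exact ⟨d, by simpa [hc] using hcd⟩

theorem fGamma_of_abs_lt_one {y : ℝ} (hy : |y| < 1) : fGamma y = -y⁻¹ := by
  obtain ⟨hlow, hupp⟩ := abs_lt.mp hy
  rw [fGamma, if_neg hlow.not_ge, if_pos hupp, neg_div, one_div]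

theorem fGamma_of_le_neg_one {y : ℝ} (hy : y ≤ -1) : fGamma y = y + 1 :=
  if_pos hy

theorem fGamma_of_one_le {y : ℝ} (hy : 1 ≤ y) : fGamma y = y - 1 := by
  rw [fGamma, if_neg (by linarith), if_neg hy.not_gt]

theorem mapsTo_fGamma_irrational : Set.MapsTo fGamma {y | Irrational y} {y | Irrational y} := by
  intro y (hy : Irrational y)
  change Irrational (fGamma y)
  rcases lt_or_ge |y| 1 with hlt | hge
  · rw [fGamma_of_abs_lt_one hlt]
    exact hy.inv.neg
  rcases le_abs'.mp hge with hneg | hpos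
  · rw [fGamma_of_le_neg_one hneg]
    exact_mod_cast hy.add_intCast 1
  · rw [fGamma_of_one_le hpos]
    exact_mod_cast hy.sub_intCast 1

theorem abs_fGamma_of_one_le_abs {y : ℝ} (hy : 1 ≤ |y|) : |fGamma y| = |y| - 1 := by
  rcases le_abs'.mp hy with hneg | hpos
  · rw [fGamma_of_le_neg_one hneg, abs_of_nonpos (by linarith), abs_of_nonpos (by linarith)]
    ring
  · rw [fGamma_of_one_le hpos, abs_of_nonneg (by linarith), abs_of_nonneg (by linarith)]

theorem abs_iterate_fGamma {x : ℝ} {N : ℕ} (h : ∀ k < N, 1 ≤ |fGamma^[k] x|) :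
    |fGamma^[N] x| = |x| - N := by
  induction N with
  | zero => simp
  | succ N ih =>
    rw [Function.iterate_succ_apply', abs_fGamma_of_one_le_abs (h N N.lt_succ_self),
      ih fun k hk ↦ h k (hk.trans N.lt_succ_self)]
    push_cast
    ring

/-- The factor by which one step of `fGamma` rescales the lattice: see
`fGammaFactor_smul_latticeOf_fGamma`. -/
noncomputable def fGammaFactor (y : ℝ) : ℝ :=
  if |y| < 1 then y else 1

theorem fGammaFactor_ne_zero {y : ℝ} (hy : y ≠ 0) : fGammaFactor y ≠ 0 := by
  unfold fGammaFactor
  split_ifs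
  exacts [hy, one_ne_zero]

theorem abs_fGammaFactor (y : ℝ) : |fGammaFactor y| = min |y| 1 := by
  unfold fGammaFactor
  split_ifs with hy
  · exact (min_eq_left hy.le).symm
  · rw [abs_one, min_eq_right (not_lt.mp hy)]

theorem fGammaFactor_smul_latticeOf_fGamma {y : ℝ} (hy : y ≠ 0) :
    fGammaFactor y • latticeOf (fGamma y) = latticeOf y := by
  unfold fGammaFactor
  split_ifs with hlt
  · rw [fGamma_of_abs_lt_one hlt, smul_latticeOf_neg_inv hy]
  rw [one_smul]
  rcases le_abs'.mp (not_lt.mp hlt) with hneg | hpos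
  · rw [fGamma_of_le_neg_one hneg]
    exact_mod_cast latticeOf_add_intCast y 1
  · rw [fGamma_of_one_le hpos, sub_eq_add_neg]
    exact_mod_cast latticeOf_add_intCast y (-1)

theorem stmt_2 (x : ℝ) (hx : Irrational x)
    (hnotquad : ¬ ∃ a b c : ℤ, a ≠ 0 ∧ (a : ℝ) * x ^ 2 + (b : ℝ) * x + (c : ℝ) = 0) :
    ∀ N : ℕ, 1 ≤ N → fGamma^[N] x ≠ x := by
  intro N hN hfix
  set q := ∏ k ∈ Finset.range N, fGammaFactor (fGamma^[k] x) with q_def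
  have q_smul : q • latticeOf x = latticeOf x := by
    have orbit := prod_smul_iterate mapsTo_fGamma_irrational
      (fun y (hy : Irrational y) ↦ fGammaFactor_smul_latticeOf_fGamma hy.ne_zero) hx N
    rwa [hfix] at orbit
  have q_ne_zero : q ≠ 0 := Finset.prod_ne_zero_iff.mpr fun k _ ↦
    fGammaFactor_ne_zero (mapsTo_fGamma_irrational.iterate k hx).ne_zero
  have one_le_abs_q : 1 ≤ |q| := by
    obtain ⟨n, hn⟩ := exists_intCast_eq_of_smul_latticeOf_le hnotquad q_smul.le
    rw [← hn] at q_ne_zero ⊢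
    exact_mod_cast Int.one_le_abs (Int.cast_ne_zero.mp q_ne_zero)
  have orbit_outside : ∀ k < N, 1 ≤ |fGamma^[k] x| := by
    simp only [q_def, Finset.abs_prod, abs_fGammaFactor] at one_le_abs_q
    exact fun k hk ↦ one_le_of_one_le_prod_min (fun _ _ ↦ abs_nonneg _) one_le_abs_q
      (Finset.mem_range.mpr hk)
  have abs_drop := abs_iterate_fGamma orbit_outside
  rw [hfix, eq_comm, sub_eq_self] at abs_drop
  exact Nat.one_le_iff_ne_zero.mp hN (by exact_mod_cast abs_drop)
end

section
/- The itinerary map I, restricted to the set of irrational real numbers with the subspace topology and mapping into the sequence space ({0,2,4})^ℕ with the product topology, is continuous and satisfies the semiconjugacy identity I(f_Γ(x)) = σ(I(x)) for every irrational x, where σ is the one-sided shift σ(s)(n) = s(n+1). -/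
/-- The symbol of a point: 2 on (-∞,-1), 0 on (-1,1), 4 on (1,∞). -/
noncomputable def symb (x : ℝ) : ℕ :=
  if x < -1 then 2 else if x < 1 then 0 else 4

/-- The itinerary of a point under `fGamma`. -/
noncomputable def itin (x : ℝ) : ℕ → ℕ :=
  fun n => symb (fGamma^[n] x)

/-!
An itinerary is continuous at every point whose orbit meets no discontinuity of the map or of the
symbol function. Here the discontinuities lie among `-1`, `0` and `1`, all rational, and the orbit
of an irrational point consists of irrational points because each branch of `fGamma` preserves
irrationality.
-/

open Set

section Itinerary

variable {X A : Type*} [TopologicalSpace X] [TopologicalSpace A] {f : X → X} {s : X → A} {x : X}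

theorem continuousAt_iterate_of_forall_orbit (hf : ∀ n, ContinuousAt f (f^[n] x)) (n : ℕ) :
    ContinuousAt f^[n] x := by
  induction n with
  | zero => exact continuousAt_id
  | succ n ih =>
    rw [Function.iterate_succ']
    exact (hf n).comp ih

theorem continuousAt_itinerary_of_forall_orbit (hf : ∀ n, ContinuousAt f (f^[n] x))
    (hs : ∀ n, ContinuousAt s (f^[n] x)) : ContinuousAt (fun y n => s (f^[n] y)) x :=
  continuousAt_pi.2 fun n => (hs n).comp (continuousAt_iterate_of_forall_orbit hf n)

end Itinerary

theorem eqOn_fGamma_Iic : EqOn fGamma (fun x => x + 1) (Iic (-1)) :=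
  fun _ hx => if_pos hx

theorem eqOn_fGamma_Ioo : EqOn fGamma (fun x => -1 / x) (Ioo (-1) 1) :=
  fun _ hx => (if_neg hx.1.not_ge).trans (if_pos hx.2)

theorem eqOn_fGamma_Ici : EqOn fGamma (fun x => x - 1) (Ici 1) := fun x (hx : 1 ≤ x) =>
  (if_neg (by linarith)).trans (if_neg hx.not_gt)

theorem continuousAt_fGamma {x : ℝ} (hneg : x ≠ -1) (hzero : x ≠ 0) (hone : x ≠ 1) :
    ContinuousAt fGamma x := by
  rcases hneg.lt_or_gt with hlt | hgt
  · have hbranch : ContinuousOn (fun y : ℝ => y + 1) (Iic (-1)) := by fun_prop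
    exact (hbranch.congr eqOn_fGamma_Iic).continuousAt (Iic_mem_nhds hlt)
  rcases hone.lt_or_gt with hlt' | hgt'
  · have hbranch : ContinuousAt (fun y : ℝ => -1 / y) x := by fun_prop (disch := exact hzero)
    exact hbranch.congr (eqOn_fGamma_Ioo.eventuallyEq_of_mem (Ioo_mem_nhds hgt hlt')).symm
  · have hbranch : ContinuousOn (fun y : ℝ => y - 1) (Ici 1) := by fun_prop
    exact (hbranch.congr eqOn_fGamma_Ici).continuousAt (Ici_mem_nhds hgt')

theorem eqOn_symb_Iio : EqOn symb (fun _ => 2) (Iio (-1)) :=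
  fun _ hx => if_pos hx

theorem eqOn_symb_Ico : EqOn symb (fun _ => 0) (Ico (-1) 1) :=
  fun _ hx => (if_neg hx.1.not_gt).trans (if_pos hx.2)

theorem eqOn_symb_Ici : EqOn symb (fun _ => 4) (Ici 1) := fun x (hx : 1 ≤ x) =>
  (if_neg (by linarith)).trans (if_neg hx.not_gt)

theorem continuousAt_symb {x : ℝ} (hneg : x ≠ -1) (hone : x ≠ 1) : ContinuousAt symb x := by
  rcases hneg.lt_or_gt with hlt | hgt
  · exact (continuousOn_const.congr eqOn_symb_Iio).continuousAt (Iio_mem_nhds hlt)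
  rcases hone.lt_or_gt with hlt' | hgt'
  · exact (continuousOn_const.congr eqOn_symb_Ico).continuousAt (Ico_mem_nhds hgt hlt')
  · exact (continuousOn_const.congr eqOn_symb_Ici).continuousAt (Ici_mem_nhds hgt')

theorem mapsTo_fGamma_irrational_s5 : MapsTo fGamma {x | Irrational x} {x | Irrational x} := by
  intro x (hx : Irrational x)
  change Irrational (fGamma x)
  unfold fGamma
  split_ifs
  · exact_mod_cast hx.add_intCast 1
  · rw [neg_div, one_div]
    exact hx.inv.neg
  · exact_mod_cast hx.sub_intCast 1

theorem continuousAt_itin {x : ℝ} (hx : Irrational x) : ContinuousAt itin x := by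
  have horbit (n : ℕ) : Irrational (fGamma^[n] x) := mapsTo_fGamma_irrational_s5.iterate n hx
  have hneg (n : ℕ) : fGamma^[n] x ≠ -1 := by exact_mod_cast (horbit n).ne_int (-1)
  exact continuousAt_itinerary_of_forall_orbit
    (fun n => continuousAt_fGamma (hneg n) (horbit n).ne_zero (horbit n).ne_one)
    (fun n => continuousAt_symb (hneg n) (horbit n).ne_one)

theorem itin_fGamma (x : ℝ) : itin (fGamma x) = fun n => itin x (n + 1) := rfl

theorem stmt_5 :
    Continuous (fun x : {x : ℝ // Irrational x} => itin x.val) ∧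
      ∀ x : ℝ, Irrational x → itin (fGamma x) = fun n => itin x (n + 1) := by
  refine ⟨continuous_iff_continuousAt.2 fun x => ?_, fun x _ => itin_fGamma x⟩
  exact (continuousAt_itin x.property).comp continuousAt_subtype_val
end

section
/- The itinerary of an irrational real number under f_Γ contains none of the two-letter blocks 00, 24, 42: for every irrational x and every n ∈ ℕ, it is not the case that I(x)(n) = 0 and I(x)(n+1) = 0; it is not the case that I(x)(n) = 2 and I(x)(n+1) = 4; and it is not the case that I(x)(n) = 4 and I(x)(n+1) = 2. -/
/-!
The three exclusions concern a single step `x ↦ fGamma x`. On `(-1, 1) \ {0}` the map `x ↦ -1 / x`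
has values of absolute value greater than `1`, which excludes `00`; the unit translations towards
the origin applied outside `(-1, 1)` do not cross the origin, which excludes `24` and `42`.
The block `00` does occur at `-1` and at `0`, since `fGamma (-1) = 0` and, as `-1 / 0 = 0` in Lean,
`fGamma 0 = 0`; an irrational orbit meets neither point.
-/

section

variable {x : ℝ}

lemma fGamma_of_le_neg_one_s6 (hx : x ≤ -1) : fGamma x = x + 1 :=
  if_pos hx

lemma fGamma_of_abs_lt_one_s6 (hx : |x| < 1) : fGamma x = -1 / x := by
  obtain ⟨h_left, h_right⟩ := abs_lt.mp hx
  rw [fGamma, if_neg h_left.not_ge, if_pos h_right]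

lemma fGamma_of_one_le_s6 (hx : 1 ≤ x) : fGamma x = x - 1 := by
  rw [fGamma, if_neg (by linarith), if_neg hx.not_gt]

lemma fGamma_nonpos_of_le_neg_one (hx : x ≤ -1) : fGamma x ≤ 0 := by
  rw [fGamma_of_le_neg_one_s6 hx]
  linarith

lemma one_lt_abs_fGamma (hx₀ : x ≠ 0) (hx : |x| < 1) : 1 < |fGamma x| := by
  rw [fGamma_of_abs_lt_one_s6 hx, abs_div, abs_neg, abs_one]
  exact one_lt_one_div (abs_pos.mpr hx₀) hx

lemma fGamma_nonneg_of_one_le (hx : 1 ≤ x) : 0 ≤ fGamma x := by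
  rw [fGamma_of_one_le_s6 hx]
  linarith

lemma irrational_fGamma (hx : Irrational x) : Irrational (fGamma x) := by
  unfold fGamma
  split_ifs
  · exact_mod_cast hx.add_intCast 1
  · exact_mod_cast hx.intCast_div (m := -1) (by decide)
  · exact_mod_cast hx.sub_intCast 1

lemma irrational_iterate_fGamma (hx : Irrational x) (n : ℕ) : Irrational (fGamma^[n] x) :=
  Function.Iterate.rec Irrational hx (fun _ => irrational_fGamma) n

lemma symb_eq_two_iff : symb x = 2 ↔ x < -1 := by
  grind [symb]

lemma symb_eq_zero_iff : symb x = 0 ↔ -1 ≤ x ∧ x < 1 := by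
  grind [symb]

lemma symb_eq_four_iff : symb x = 4 ↔ 1 ≤ x := by
  grind [symb]

lemma eq_zero_or_eq_neg_one_of_symb_fGamma_eq_zero (hx : symb x = 0) (hfx : symb (fGamma x) = 0) :
    x = 0 ∨ x = -1 := by
  obtain ⟨h_left, h_right⟩ := symb_eq_zero_iff.mp hx
  obtain ⟨hf_left, hf_right⟩ := symb_eq_zero_iff.mp hfx
  by_contra! h
  have habs : |x| < 1 := abs_lt.mpr ⟨lt_of_le_of_ne h_left h.2.symm, h_right⟩
  exact (one_lt_abs_fGamma h.1 habs).not_ge (abs_le.mpr ⟨hf_left, hf_right.le⟩)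

lemma symb_fGamma_ne_four (hx : symb x = 2) : symb (fGamma x) ≠ 4 := by
  rw [symb_eq_two_iff] at hx
  rw [Ne, symb_eq_four_iff, not_le]
  exact (fGamma_nonpos_of_le_neg_one hx.le).trans_lt one_pos

lemma symb_fGamma_ne_two (hx : symb x = 4) : symb (fGamma x) ≠ 2 := by
  rw [symb_eq_four_iff] at hx
  rw [Ne, symb_eq_two_iff, not_lt]
  exact neg_one_lt_zero.le.trans (fGamma_nonneg_of_one_le hx)

end

lemma itin_succ (x : ℝ) (n : ℕ) : itin x (n + 1) = symb (fGamma (fGamma^[n] x)) := by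
  rw [itin, Function.iterate_succ_apply']

theorem stmt_6_general (x : ℝ) (n : ℕ) :
    (itin x n = 0 ∧ itin x (n + 1) = 0 → fGamma^[n] x = 0 ∨ fGamma^[n] x = -1) ∧
      ¬(itin x n = 2 ∧ itin x (n + 1) = 4) ∧
        ¬(itin x n = 4 ∧ itin x (n + 1) = 2) := by
  rw [itin_succ]
  exact ⟨fun h => eq_zero_or_eq_neg_one_of_symb_fGamma_eq_zero h.1 h.2,
    fun h => symb_fGamma_ne_four h.1 h.2, fun h => symb_fGamma_ne_two h.1 h.2⟩

theorem stmt_6 (x : ℝ) (hx : Irrational x) (n : ℕ) :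
    ¬(itin x n = 0 ∧ itin x (n + 1) = 0) ∧
      ¬(itin x n = 2 ∧ itin x (n + 1) = 4) ∧
        ¬(itin x n = 4 ∧ itin x (n + 1) = 2) := by
  have hirr := irrational_iterate_fGamma hx n
  exact (stmt_6_general x n).imp_left fun h00 h => (h00 h).elim hirr.ne_zero
    (by exact_mod_cast hirr.ne_int (-1))
end
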